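/- arXiv:1501.04513 — 2 statements merged into one kernel-verified Lean document; each statement's English description precedes it below -/
import Mathlib

section
/- If f, g : ℝ^N → [−∞, ∞] are Borel measurable, then the functions f⊼g and f⊻g are Lebesgue measurable. -/
open MeasureTheory Filter Set
open scoped ENNReal NNReal Pointwise

noncomputable section

/-- `ℝ^N` with the Euclidean structure and Lebesgue measure. -/
abbrev ES (N : ℕ) := EuclideanSpace ℝ (Fin N)

variable {N : ℕ}

/-- The operation `(f ⊼ g)(x) = sup_y min (f (x - y)) (g y)` for extended-real valued
functions. -/
def supMinE (f g : ES N → EReal) (x : ES N) : EReal := ⨆ y, min (f (x - y)) (g y)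

/-- The operation `(f ⊻ g)(x) = inf_y max (f (x - y)) (g y)` for extended-real valued
functions. -/
def infMaxE (f g : ES N → EReal) (x : ES N) : EReal := ⨅ y, max (f (x - y)) (g y)

/-- The infimal convolution `(f □ g)(x) = inf_y (f (x - y) + g y)`. -/
def infConvE (f g : ES N → EReal) (x : ES N) : EReal := ⨅ y, (f (x - y) + g y)

/-- The operation `(f ⊼ g)(x) = sup_y min (f (x - y)) (g y)` for `[0,∞]`-valued functions. -/
def supMin (f g : ES N → ℝ≥0∞) (x : ES N) : ℝ≥0∞ := ⨆ y, min (f (x - y)) (g y)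

/-- A Young function: a nonconstant, nondecreasing, convex, left-continuous
`φ : [0,∞] → [0,∞]` with `φ 0 = 0`. -/
structure IsYoungFunction (φ : ℝ≥0∞ → ℝ≥0∞) : Prop where
  nonconstant : ∃ x y, φ x ≠ φ y
  map_zero : φ 0 = 0
  mono : Monotone φ
  convex : ∀ ⦃a b x y : ℝ≥0∞⦄, a + b = 1 → φ (a * x + b * y) ≤ a * φ x + b * φ y
  left_continuous : ∀ x, ContinuousWithinAt φ (Set.Iio x) x

/-- The Luxemburg norm `‖h‖_φ = inf {r > 0 | ∫ φ (r⁻¹ |h|) ≤ 1}` (`= ∞` if no such `r`),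
for a nonnegative function `h`. -/
def luxNorm (φ : ℝ≥0∞ → ℝ≥0∞) (h : ES N → ℝ≥0∞) : ℝ≥0∞ :=
  sInf {r : ℝ≥0∞ | 0 < r ∧ ∫⁻ x, φ (r⁻¹ * h x) ≤ 1}

/-- The nonnegative part of an extended real, as an element of `[0,∞]`. -/
def toENN (a : EReal) : ℝ≥0∞ := if a = ⊤ then ⊤ else ENNReal.ofReal a.toReal

/-- The reciprocal `1/a ∈ [0,∞]` of an extended real (intended for `a ≥ 0`), with the
conventions `1/0 = ∞` and `1/∞ = 0`. -/
def eInv (a : EReal) : ℝ≥0∞ := (toENN a)⁻¹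

/-- The enclosing radius of a set `X ⊆ ℝ^N`: the infimum of the radii of closed balls
containing `X` (`0` for `X = ∅`, `∞` if `X` is unbounded). -/
def encRadius (X : Set (ES N)) : ℝ≥0∞ := sInf {r : ℝ≥0∞ | ∃ c : ES N, ∀ x ∈ X, edist x c ≤ r}

/-- The transform `f̂(x) = γ_f^+(|x|)` where `γ_f^+(t) = inf {ξ | ρ_f^+(ξ) ≤ t}` and
`ρ_f^+(ξ)` is the enclosing radius of the upper level set `{f > ξ}`. -/
def hatE (f : ES N → EReal) (x : ES N) : EReal :=
  sInf {ξ : EReal | encRadius {y | ξ < f y} ≤ (‖x‖₊ : ℝ≥0∞)}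

/-- The lower transform `f̌ = -((-f)^)`. -/
def checkE (f : ES N → EReal) (x : ES N) : EReal := - hatE (fun y => - f y) x

/-- The transform `f̂` for `[0,∞]`-valued functions. -/
def hatT (f : ES N → ℝ≥0∞) (x : ES N) : ℝ≥0∞ :=
  sInf {ξ : ℝ≥0∞ | encRadius {y | ξ < f y} ≤ (‖x‖₊ : ℝ≥0∞)}

/-- The lower transform `f̌(x) = γ_f^-(|x|)`, `γ_f^-(t) = sup {ξ | ρ({f < ξ}) ≤ t}`,
for `[0,∞]`-valued functions. -/
def checkT (f : ES N → ℝ≥0∞) (x : ES N) : ℝ≥0∞ :=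
  sSup {ξ : ℝ≥0∞ | encRadius {y | f y < ξ} ≤ (‖x‖₊ : ℝ≥0∞)}

/-- The `L^p` "norm" (`p ∈ [1,∞]`, essential supremum when `p = ∞`) of a `[0,∞]`-valued
function. -/
def pNorm (p : ℝ≥0∞) (h : ES N → ℝ≥0∞) : ℝ≥0∞ :=
  if p = ∞ then essSup h volume else (∫⁻ x, h x ^ p.toReal) ^ (1 / p.toReal)

/-! Each superlevel set of `x ↦ ⨆ y, h x y` is the projection of a superlevel set of `h`, so it is
analytic when `h` is jointly Borel, and dually for the infimum. Analytic sets are measurable for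
every s-finite measure, by Choquet's argument: if `c < μ (range f)` with `f` continuous on the Baire
space, continuity of `μ` along increasing unions of arbitrary sets lets one bound the coordinates
one after another by `n 0, n 1, …` while the image keeps measure above `c`. By compactness, every
open set containing the image of the box `∏ i, [0, n i]` already contains the image of a set with
only finitely many coordinates bounded, so by outer regularity the compact image of the box has
measure at least `c`. -/

section Cylinder

variable {ι : Type*} {X : ι → Type*} [∀ i, TopologicalSpace (X i)] {V : Set (∀ i, X i)}

theorem exists_finset_forall_eq_mem_of_isCompact {K : Set (∀ i, X i)} (hK : IsCompact K)
    (hV : IsOpen V) (hKV : K ⊆ V) :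
    ∃ I : Finset ι, ∀ x ∈ K, ∀ y : ∀ i, X i, (∀ i ∈ I, y i = x i) → y ∈ V := by
  classical
  refine hK.induction_on
    (p := fun t => ∃ I : Finset ι, ∀ x ∈ t, ∀ y : ∀ i, X i, (∀ i ∈ I, y i = x i) → y ∈ V)
    ⟨∅, fun _ hx => hx.elim⟩ ?_ ?_ ?_
  · rintro s t hst ⟨I, hI⟩
    exact ⟨I, fun x hx => hI x (hst hx)⟩
  · rintro s t ⟨I, hI⟩ ⟨J, hJ⟩
    refine ⟨I ∪ J, ?_⟩
    rintro x (hx | hx) y hxy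
    · exact hI x hx y fun i hi => hxy i (Finset.mem_union_left J hi)
    · exact hJ x hx y fun i hi => hxy i (Finset.mem_union_right I hi)
  · intro x hx
    obtain ⟨I, u, hu, huV⟩ := isOpen_pi_iff.1 hV x (hKV hx)
    have hnhds : (I : Set ι).pi u ∈ nhds x :=
      set_pi_mem_nhds I.finite_toSet fun i hi => (hu i hi).1.mem_nhds (hu i hi).2
    refine ⟨_, mem_nhdsWithin_of_mem_nhds hnhds, I, fun z hz y hy => huV fun i hi => ?_⟩
    rw [hy i hi]
    exact hz i hi

theorem exists_finset_pi_subset_of_isOpen {A : ∀ i, Set (X i)} (hA : ∀ i, IsCompact (A i))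
    (hV : IsOpen V) (hAV : univ.pi A ⊆ V) : ∃ I : Finset ι, (I : Set ι).pi A ⊆ V := by
  classical
  obtain hempty | ⟨a, ha⟩ := (univ.pi A).eq_empty_or_nonempty
  · obtain ⟨i, hi⟩ := univ_pi_eq_empty_iff.1 hempty
    exact ⟨{i}, fun x hx => by simpa [hi] using hx i⟩
  · obtain ⟨I, hI⟩ := exists_finset_forall_eq_mem_of_isCompact (isCompact_univ_pi hA) hV hAV
    refine ⟨I, fun y hy => hI (I.piecewise y a) (fun i _ => ?_) y fun i hi => ?_⟩
    · by_cases hi : i ∈ I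
      · simpa [hi] using hy i hi
      · simpa [hi] using ha i
    · simp [hi]

end Cylinder

section InnerRegular

variable {α : Type*} [MeasurableSpace α] {μ : Measure α}

theorem exists_lt_measure_image_inter_preimage_Iic {β ι : Type*} [Preorder ι] [IsDirectedOrder ι]
    [(atTop : Filter ι).IsCountablyGenerated] {f : β → α} {T : Set β} {c : ℝ≥0∞}
    (h : β → ι) (hc : c < μ (f '' T)) : ∃ m, c < μ (f '' (T ∩ h ⁻¹' Iic m)) := by
  have hmono : Monotone fun m => f '' (T ∩ h ⁻¹' Iic m) := fun a b hab => by
    dsimp only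
    gcongr
  have hunion : ⋃ m, f '' (T ∩ h ⁻¹' Iic m) = f '' T := by
    rw [← image_iUnion, ← inter_iUnion, ← preimage_iUnion, iUnion_Iic, preimage_univ, inter_univ]
  rwa [← hunion, hmono.measure_iUnion, lt_iSup_iff] at hc

theorem exists_forall_lt_measure_image_pi_Iic {ι : Type*} [Preorder ι] [IsDirectedOrder ι]
    [(atTop : Filter ι).IsCountablyGenerated] {f : (ℕ → ι) → α} {c : ℝ≥0∞}
    (hc : c < μ (range f)) :
    ∃ n : ℕ → ι, ∀ k, c < μ (f '' (Iio k).pi fun i => Iic (n i)) := by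
  have : Nonempty ι := by
    by_contra! hι
    simp [range_eq_empty f] at hc
  choose! m hm using fun (T : Set (ℕ → ι)) (k : ℕ) (hT : c < μ (f '' T)) =>
    exists_lt_measure_image_inter_preimage_Iic (fun x => x k) hT
  let T : ℕ → Set (ℕ → ι) := Nat.rec univ fun k S => S ∩ (fun x => x k) ⁻¹' Iic (m S k)
  have hT (k : ℕ) : T k = (Iio k).pi fun i => Iic (m (T i) i) := by
    induction k with
    | zero => simp [T]
    | succ k ih =>
      rw [← Order.succ_eq_add_one, Order.Iio_succ_eq_insert, insert_pi, inter_comm, ← ih]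
      rfl
  have hlt (k : ℕ) : c < μ (f '' T k) := by
    induction k with
    | zero => simpa [T] using hc
    | succ k ih => exact hm (T k) k ih
  exact ⟨fun i => m (T i) i, fun k => hT k ▸ hlt k⟩

theorem innerRegularWRT_isCompact_analyticSet [TopologicalSpace α] [μ.OuterRegular] :
    μ.InnerRegularWRT IsCompact AnalyticSet := by
  intro s hs c hc
  obtain ⟨c', hcc', hc'⟩ := exists_between hc
  rw [AnalyticSet] at hs
  obtain rfl | ⟨f, hf, rfl⟩ := hs
  · simp at hc
  obtain ⟨n, hn⟩ := exists_forall_lt_measure_image_pi_Iic hc'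
  have hcompact (i : ℕ) : IsCompact (Iic (n i)) := (finite_Iic (n i)).isCompact
  refine ⟨f '' univ.pi fun i => Iic (n i), image_subset_range _ _,
    (isCompact_univ_pi hcompact).image hf, hcc'.trans_le ?_⟩
  rw [Set.measure_eq_iInf_isOpen]
  refine le_iInf₂ fun U hKU => le_iInf fun hU => ?_
  obtain ⟨I, hI⟩ := exists_finset_pi_subset_of_isOpen hcompact (hU.preimage hf)
    (image_subset_iff.1 hKU)
  obtain ⟨k, hIk⟩ := I.exists_nat_subset_range
  have hbox : (Iio k).pi (fun i => Iic (n i)) ⊆ f ⁻¹' U :=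
    (pi_mono' (fun _ _ => Subset.rfl) fun i hi => Finset.mem_range.1 (hIk hi)).trans hI
  exact (hn k).le.trans (measure_mono (image_subset_iff.2 hbox))

theorem nullMeasurableSet_of_innerRegularWRT {q : Set α → Prop}
    (hμ : μ.InnerRegularWRT MeasurableSet q) {s : Set α} (hs : q s) (hμs : μ s ≠ ∞) :
    NullMeasurableSet s μ := by
  choose K hKs hK hμK using fun j : ℕ =>
    hμ.exists_subset_lt_add .empty hs hμs (ENNReal.inv_ne_zero.2 (ENNReal.natCast_ne_top j))
  have hmeas : MeasurableSet (⋃ j, K j) := .iUnion hK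
  have hle : μ s ≤ μ (⋃ j, K j) := by
    have hlim := ENNReal.tendsto_inv_nat_nhds_zero.const_add (μ (⋃ j, K j))
    rw [add_zero] at hlim
    refine ge_of_tendsto' hlim fun j => (hμK j).le.trans ?_
    gcongr
    exact subset_iUnion K j
  have hsub : ⋃ j, K j ⊆ s := iUnion_subset hKs
  exact hmeas.nullMeasurableSet.congr (ae_eq_of_subset_of_measure_ge hsub hle
    hmeas.nullMeasurableSet hμs)

theorem nullMeasurableSet_of_analyticSet [TopologicalSpace α]
    [TopologicalSpace.MetrizableSpace α] [BorelSpace α] {s : Set α} (hs : AnalyticSet s)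
    (μ : Measure α) [SFinite μ] : NullMeasurableSet s μ := by
  have hinner : μ.toFinite.InnerRegularWRT MeasurableSet AnalyticSet :=
    fun t ht c hc =>
      let ⟨K, hKt, hK, hcK⟩ := innerRegularWRT_isCompact_analyticSet ht c hc
      ⟨K, hKt, hK.measurableSet, hcK⟩
  exact (nullMeasurableSet_of_innerRegularWRT hinner hs (measure_ne_top _ s)).mono_ac
    (absolutelyContinuous_toFinite μ)

theorem nullMeasurableSet_image_of_measurable [StandardBorelSpace α] {γ : Type*}
    [MeasurableSpace γ] [StandardBorelSpace γ] {f : γ → α} (hf : Measurable f) {s : Set γ}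
    (hs : MeasurableSet s) (μ : Measure α) [SFinite μ] : NullMeasurableSet (f '' s) μ := by
  let := upgradeStandardBorel α
  exact nullMeasurableSet_of_analyticSet (hs.analyticSet_image hf) μ

end InnerRegular

section Envelope

variable {α β γ : Type*} [MeasurableSpace α] [StandardBorelSpace α] [MeasurableSpace γ]
  [StandardBorelSpace γ] [CompleteLinearOrder β] [TopologicalSpace β] [OrderTopology β]
  [SecondCountableTopology β] [MeasurableSpace β] [BorelSpace β] {h : α → γ → β}

theorem aemeasurable_iSup_of_measurable_uncurry (hh : Measurable (Function.uncurry h))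
    (μ : Measure α) [SFinite μ] : AEMeasurable (fun x => ⨆ y, h x y) μ := by
  have hnull (a : β) : NullMeasurableSet ((fun x => ⨆ y, h x y) ⁻¹' Ioi a) μ := by
    have hproj : (fun x => ⨆ y, h x y) ⁻¹' Ioi a =
        Prod.fst '' (Function.uncurry h ⁻¹' Ioi a) := by
      ext x
      simp [lt_iSup_iff]
    rw [hproj]
    exact nullMeasurableSet_image_of_measurable measurable_fst (hh measurableSet_Ioi) μ
  exact NullMeasurable.aemeasurable (measurable_of_Ioi (δ := NullMeasurableSpace α μ) hnull)

theorem aemeasurable_iInf_of_measurable_uncurry (hh : Measurable (Function.uncurry h))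
    (μ : Measure α) [SFinite μ] : AEMeasurable (fun x => ⨅ y, h x y) μ :=
  aemeasurable_iSup_of_measurable_uncurry (β := βᵒᵈ) hh μ

theorem supMinE_infMaxE_lebesgue_measurable_general [Sub α] [MeasurableSub₂ α] {f g : α → β}
    (hf : Measurable f) (hg : Measurable g) (μ : Measure α) [SFinite μ] :
    AEMeasurable (fun x => ⨆ y, min (f (x - y)) (g y)) μ ∧
      AEMeasurable (fun x => ⨅ y, max (f (x - y)) (g y)) μ := by
  have hfsub : Measurable fun p : α × α => f (p.1 - p.2) := hf.comp measurable_sub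
  have hgsnd : Measurable fun p : α × α => g p.2 := hg.comp measurable_snd
  exact ⟨aemeasurable_iSup_of_measurable_uncurry (hfsub.min hgsnd) μ,
    aemeasurable_iInf_of_measurable_uncurry (hfsub.max hgsnd) μ⟩

end Envelope

theorem supMinE_infMaxE_lebesgue_measurable {N : ℕ}
    (f g : ES N → EReal) (hf : Measurable f) (hg : Measurable g) :
    AEMeasurable (supMinE f g) (volume : Measure (ES N)) ∧
      AEMeasurable (infMaxE f g) (volume : Measure (ES N)) :=
  supMinE_infMaxE_lebesgue_measurable_general hf hg volume

end
end

section
/- If f, g : ℝ^N → [0, ∞] are Borel measurable, then ∫_{ℝ^N} (f⊼g) dμ_N ≤ 2^{N−1} ( ∫_{ℝ^N} f̂ dμ_N + ∫_{ℝ^N} ĝ dμ_N ). -/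
open MeasureTheory Filter Set
open scoped ENNReal NNReal Pointwise

noncomputable section

variable {N : ℕ}

/-!
The strict superlevel set `{f ⊼ g > ξ}` is the Minkowski sum `{f > ξ} + {g > ξ}`, and the enclosing
radius `ρ` is subadditive under Minkowski sums. With `ω` the measure of the unit ball,
`μ X ≤ ρ(X)^N ω` and convexity of `r ↦ r^N` therefore give
`μ {f ⊼ g > ξ} ≤ 2^(N-1) (ρ_f^+(ξ)^N ω + ρ_g^+(ξ)^N ω)`. Since `f̂ ≥ ξ` on the open ball of radius
`ρ_f^+(ξ)`, the terms on the right are bounded by `μ {f̂ ≥ ξ}` and `μ {ĝ ≥ ξ}`; integrating over `ξ`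
gives the inequality.
-/

section LayerCake

variable {α : Type*} [MeasurableSpace α] (μ : Measure α) [SFinite μ]

theorem lintegral_eq_setLIntegral_measure_ofReal_lt {h : α → ℝ≥0∞} (hh : Measurable h) :
    ∫⁻ x, h x ∂μ = ∫⁻ t in Ioi (0 : ℝ), μ {x | ENNReal.ofReal t < h x} := by
  set S : Set (α × ℝ) := {p | ENNReal.ofReal p.2 < h p.1}
  have hS : MeasurableSet S := measurableSet_lt (by fun_prop) (by fun_prop)
  have volume_section (x : α) : volume.restrict (Ioi 0) (Prod.mk x ⁻¹' S) = h x := by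
    rw [Measure.restrict_apply (measurable_prodMk_left hS)]
    rcases eq_or_ne (h x) ∞ with hx | hx
    · simp [S, hx]
    · have : Prod.mk x ⁻¹' S ∩ Ioi 0 = Ioo 0 (h x).toReal := by
        ext t
        exact and_comm.trans <|
          and_congr_right fun ht => ENNReal.ofReal_lt_iff_lt_toReal (le_of_lt ht) hx
      rw [this, Real.volume_Ioo, sub_zero, ENNReal.ofReal_toReal hx]
  calc ∫⁻ x, h x ∂μ = ∫⁻ x, volume.restrict (Ioi 0) (Prod.mk x ⁻¹' S) ∂μ := by
        simp only [volume_section]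
    _ = (μ.prod (volume.restrict (Ioi 0))) S := (Measure.prod_apply hS).symm
    _ = ∫⁻ t in Ioi (0 : ℝ), μ {x | ENNReal.ofReal t < h x} := Measure.prod_apply_symm hS

theorem lintegral_eq_setLIntegral_measure_ofReal_le {h : α → ℝ≥0∞} (hh : Measurable h) :
    ∫⁻ x, h x ∂μ = ∫⁻ t in Ioi (0 : ℝ), μ {x | ENNReal.ofReal t ≤ h x} := by
  rw [lintegral_eq_setLIntegral_measure_ofReal_lt μ hh]
  have countable_ne : {t ∈ Ioi (0 : ℝ) |
      μ {x | ENNReal.ofReal t ≤ h x} ≠ μ {x | ENNReal.ofReal t < h x}}.Countable :=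
    MapsTo.countable_of_injOn (f := ENNReal.ofReal) (fun _ ht => ht.2)
      (fun s hs t ht => (ENNReal.ofReal_eq_ofReal_iff (le_of_lt hs.1) (le_of_lt ht.1)).1)
      (countable_meas_le_ne_meas_lt μ h)
  refine setLIntegral_congr_fun_ae measurableSet_Ioi ?_
  filter_upwards [countable_ne.ae_notMem volume] with t ht htpos
  by_contra hne
  exact ht ⟨htpos, Ne.symm hne⟩

theorem lintegral_le_setLIntegral_measure_ofReal_lt (h : α → ℝ≥0∞) :
    ∫⁻ x, h x ∂μ ≤ ∫⁻ t in Ioi (0 : ℝ), μ {x | ENNReal.ofReal t < h x} := by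
  obtain ⟨k, hk, hkh, heq⟩ := exists_measurable_le_lintegral_eq μ h
  rw [heq, lintegral_eq_setLIntegral_measure_ofReal_lt μ hk]
  gcongr with t x
  exact hkh x

end LayerCake

section HaarBall

variable {E : Type*} [NormedAddCommGroup E] [NormedSpace ℝ E] [FiniteDimensional ℝ E]
  [Nontrivial E] [MeasurableSpace E] [BorelSpace E] (μ : Measure E) [μ.IsAddHaarMeasure]

theorem addHaar_eball (c : E) (r : ℝ≥0∞) :
    μ (Metric.eball c r) = r ^ Module.finrank ℝ E * μ (Metric.ball 0 1) := by
  induction r with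
  | top =>
    have hω : μ (Metric.ball (0 : E) 1) ≠ 0 := (Metric.measure_ball_pos μ 0 one_pos).ne'
    rw [Metric.eball_top_eq_univ, measure_univ_of_isAddLeftInvariant,
      ENNReal.top_pow Module.finrank_pos.ne', ENNReal.top_mul hω]
  | coe r =>
    rw [Metric.eball_coe, Measure.addHaar_ball μ c r.coe_nonneg, ENNReal.ofReal_pow r.coe_nonneg,
      ENNReal.ofReal_coe_nnreal]

theorem addHaar_closedEBall (c : E) (r : ℝ≥0∞) :
    μ (Metric.closedEBall c r) = r ^ Module.finrank ℝ E * μ (Metric.ball 0 1) := by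
  rw [← addHaar_eball μ c]
  induction r with
  | top => rw [Metric.closedEBall_top, Metric.eball_top_eq_univ]
  | coe r =>
    rw [Metric.closedEBall_coe, Metric.eball_coe, Measure.addHaar_closedBall_eq_addHaar_ball]

end HaarBall

theorem ennreal_add_pow_le (a b : ℝ≥0∞) (n : ℕ) :
    (a + b) ^ n ≤ 2 ^ (n - 1) * (a ^ n + b ^ n) := by
  rcases eq_or_ne n 0 with rfl | hn
  · simp
  induction a with
  | top => simp [hn]
  | coe a =>
    induction b with
    | top => simp [hn]
    | coe b =>
      have h : (a + b) ^ n ≤ 2 ^ (n - 1) * (a ^ n + b ^ n) := add_pow_le zero_le zero_le n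
      exact_mod_cast h

theorem encRadius_mono {X Y : Set (ES N)} (h : X ⊆ Y) : encRadius X ≤ encRadius Y :=
  sInf_le_sInf fun _ ⟨c, hc⟩ => ⟨c, fun x hx => hc x (h hx)⟩

theorem encRadius_add_le (X Y : Set (ES N)) :
    encRadius (X + Y) ≤ encRadius X + encRadius Y := by
  simp only [encRadius, ENNReal.sInf_add, ENNReal.add_sInf]
  refine le_iInf₂ fun s ⟨d, hd⟩ => le_iInf₂ fun r ⟨c, hc⟩ => sInf_le ⟨c + d, ?_⟩
  rintro _ ⟨x, hx, y, hy, rfl⟩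
  exact (edist_add_add_le x y c d).trans (add_le_add (hc x hx) (hd y hy))

theorem addHaar_le_encRadius_pow_mul [NeZero N] (μ : Measure (ES N)) [μ.IsAddHaarMeasure]
    (X : Set (ES N)) : μ X ≤ encRadius X ^ N * μ (Metric.ball 0 1) := by
  set ω := μ (Metric.ball 0 1)
  have hω : ω ≠ 0 := (Metric.measure_ball_pos μ 0 one_pos).ne'
  have hcont : Continuous fun r : ℝ≥0∞ => r ^ N * ω :=
    (ENNReal.continuous_mul_const measure_ball_lt_top.ne).comp (ENNReal.continuous_pow N)
  have hmono : Monotone fun r : ℝ≥0∞ => r ^ N * ω := fun r s hrs => by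
    dsimp only
    gcongr
  have htop : (∞ : ℝ≥0∞) ^ N * ω = ∞ := by
    rw [ENNReal.top_pow (NeZero.ne N), ENNReal.top_mul hω]
  rw [encRadius, hmono.map_sInf_of_continuousAt hcont.continuousAt htop]
  refine le_sInf ?_
  rintro _ ⟨r, ⟨c, hc⟩, rfl⟩
  calc μ X ≤ μ (Metric.closedEBall c r) := measure_mono hc
    _ = r ^ N * ω := by rw [addHaar_closedEBall, finrank_euclideanSpace_fin]

/-- `ρ_f^+(ξ)`, the enclosing radius of the strict superlevel set `{f > ξ}`. -/
def upperRadius (f : ES N → ℝ≥0∞) (ξ : ℝ≥0∞) : ℝ≥0∞ := encRadius {y | ξ < f y}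

/-- `γ_f^+(t)`, the generalized inverse of `ρ_f^+`, through which `f̂` is the radial function
`f̂ x = γ_f^+ |x|`. It is taken on all of `[0,∞]` rather than only on finite radii `t`. -/
def upperProfile (f : ES N → ℝ≥0∞) (t : ℝ≥0∞) : ℝ≥0∞ := sInf {ξ | upperRadius f ξ ≤ t}

theorem hatT_eq_upperProfile (f : ES N → ℝ≥0∞) (x : ES N) : hatT f x = upperProfile f ‖x‖ₑ := rfl

theorem antitone_upperRadius (f : ES N → ℝ≥0∞) : Antitone (upperRadius f) :=
  fun _ _ hξη => encRadius_mono fun _ hy => hξη.trans_lt hy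

theorem antitone_upperProfile (f : ES N → ℝ≥0∞) : Antitone (upperProfile f) :=
  fun _ _ hst => sInf_le_sInf fun _ hξ => le_trans hξ hst

theorem le_upperProfile_of_lt_upperRadius {f : ES N → ℝ≥0∞} {ξ t : ℝ≥0∞}
    (ht : t < upperRadius f ξ) : ξ ≤ upperProfile f t :=
  le_sInf fun _ hη => ((antitone_upperRadius f).reflect_lt (lt_of_le_of_lt hη ht)).le

theorem measurable_hatT (f : ES N → ℝ≥0∞) : Measurable (hatT f) :=
  (antitone_upperProfile f).measurable.comp measurable_enorm

theorem upperRadius_pow_mul_le_addHaar_le_hatT [NeZero N] (μ : Measure (ES N))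
    [μ.IsAddHaarMeasure] (f : ES N → ℝ≥0∞) (ξ : ℝ≥0∞) :
    upperRadius f ξ ^ N * μ (Metric.ball 0 1) ≤ μ {x | ξ ≤ hatT f x} :=
  calc upperRadius f ξ ^ N * μ (Metric.ball 0 1) = μ (Metric.eball 0 (upperRadius f ξ)) := by
        rw [addHaar_eball, finrank_euclideanSpace_fin]
    _ ≤ μ {x | ξ ≤ hatT f x} := measure_mono fun x hx => by
        rw [Metric.mem_eball, edist_zero_right] at hx
        rw [mem_ofPred_eq, hatT_eq_upperProfile]
        exact le_upperProfile_of_lt_upperRadius hx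

theorem setOf_lt_supMin (f g : ES N → ℝ≥0∞) (ξ : ℝ≥0∞) :
    {x | ξ < supMin f g x} = {x | ξ < f x} + {x | ξ < g x} := by
  ext x
  simp only [supMin, mem_ofPred_eq, lt_iSup_iff, lt_min_iff, Set.mem_add]
  constructor
  · rintro ⟨y, hf, hg⟩
    exact ⟨x - y, hf, y, hg, sub_add_cancel x y⟩
  · rintro ⟨z, hf, y, hg, rfl⟩
    exact ⟨y, by rwa [add_sub_cancel_right], hg⟩

theorem addHaar_lt_supMin_le [NeZero N] (μ : Measure (ES N)) [μ.IsAddHaarMeasure]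
    (f g : ES N → ℝ≥0∞) (ξ : ℝ≥0∞) :
    μ {x | ξ < supMin f g x}
      ≤ 2 ^ (N - 1) * (μ {x | ξ ≤ hatT f x} + μ {x | ξ ≤ hatT g x}) := by
  set ω := μ (Metric.ball 0 1)
  have radius_le : encRadius {x | ξ < supMin f g x} ≤ upperRadius f ξ + upperRadius g ξ := by
    rw [setOf_lt_supMin]
    exact encRadius_add_le _ _
  calc μ {x | ξ < supMin f g x}
    _ ≤ encRadius {x | ξ < supMin f g x} ^ N * ω := addHaar_le_encRadius_pow_mul μ _
    _ ≤ (upperRadius f ξ + upperRadius g ξ) ^ N * ω := by gcongr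
    _ ≤ 2 ^ (N - 1) * (upperRadius f ξ ^ N + upperRadius g ξ ^ N) * ω := by
        gcongr
        exact ennreal_add_pow_le _ _ N
    _ = 2 ^ (N - 1) * (upperRadius f ξ ^ N * ω + upperRadius g ξ ^ N * ω) := by ring
    _ ≤ 2 ^ (N - 1) * (μ {x | ξ ≤ hatT f x} + μ {x | ξ ≤ hatT g x}) := by
        gcongr <;> exact upperRadius_pow_mul_le_addHaar_le_hatT μ _ ξ

theorem lintegral_supMin_le_pow_mul_add_general [NeZero N] (μ : Measure (ES N))
    [μ.IsAddHaarMeasure] (f g : ES N → ℝ≥0∞) :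
    ∫⁻ x, supMin f g x ∂μ ≤ 2 ^ (N - 1) * ((∫⁻ x, hatT f x ∂μ) + ∫⁻ x, hatT g x ∂μ) := by
  have measurable_level : Measurable fun t : ℝ => μ {x | ENNReal.ofReal t ≤ hatT f x} :=
    Antitone.measurable fun _ _ hst =>
      measure_mono fun _ hx => (ENNReal.ofReal_le_ofReal hst).trans hx
  calc ∫⁻ x, supMin f g x ∂μ
    _ ≤ ∫⁻ t in Ioi (0 : ℝ), μ {x | ENNReal.ofReal t < supMin f g x} :=
        lintegral_le_setLIntegral_measure_ofReal_lt μ _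
    _ ≤ ∫⁻ t in Ioi (0 : ℝ), 2 ^ (N - 1) *
          (μ {x | ENNReal.ofReal t ≤ hatT f x} + μ {x | ENNReal.ofReal t ≤ hatT g x}) :=
        lintegral_mono fun t => addHaar_lt_supMin_le μ f g (ENNReal.ofReal t)
    _ = 2 ^ (N - 1) * ((∫⁻ x, hatT f x ∂μ) + ∫⁻ x, hatT g x ∂μ) := by
        rw [lintegral_const_mul' _ _ (by finiteness), lintegral_add_left measurable_level,
          lintegral_eq_setLIntegral_measure_ofReal_le μ (measurable_hatT f),
          lintegral_eq_setLIntegral_measure_ofReal_le μ (measurable_hatT g)]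

theorem lintegral_supMin_le_pow_mul_add {N : ℕ} (hN : 0 < N)
    (f g : ES N → ℝ≥0∞) (hf : Measurable f) (hg : Measurable g) :
    ∫⁻ x, supMin f g x ≤ 2 ^ (N - 1) * ((∫⁻ x, hatT f x) + ∫⁻ x, hatT g x) :=
  have : NeZero N := ⟨hN.ne'⟩
  lintegral_supMin_le_pow_mul_add_general volume f g

end
end
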